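/- Random-index replacement lemma (second step of the proof of Proposition A.1). Let (X_{m,n})_{m,n≥1} be real random variables on a common probability space with uniformly bounded first moments: sup_{m,n} E[|X_{m,n}|] ≤ M < ∞. Let (k_n) be a sequence of positive integers with k_n → ∞, and let (T_n) be ℕ-valued random variables on the same space with T_n/k_n → 1 in probability. Then (1/k_n)·(Σ_{m=1}^{T_n} X_{m,n} − Σ_{m=1}^{k_n} X_{m,n}) → 0 in probability as n → ∞. -/

import Mathlib

open MeasureTheory ProbabilityTheory Filter Topology

theorem rir_sum_diff (f : ℕ → ℝ) (a b d : ℕ) (h1 : a ≤ b + d) (h2 : b ≤ a + d) :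
    |(∑ m ∈ Finset.range a, f m) - ∑ m ∈ Finset.range b, f m|
      ≤ ∑ m ∈ Finset.Ico (b - d) (b + d), |f m| := by
  rcases le_total b a with h | h
  · rw [← Finset.sum_Ico_eq_sub f h]
    refine (Finset.abs_sum_le_sum_abs _ _).trans ?_
    refine Finset.sum_le_sum_of_subset_of_nonneg ?_ (fun _ _ _ => abs_nonneg _)
    exact Finset.Ico_subset_Ico (by omega) (by omega)
  · rw [abs_sub_comm, ← Finset.sum_Ico_eq_sub f h]
    refine (Finset.abs_sum_le_sum_abs _ _).trans ?_
    refine Finset.sum_le_sum_of_subset_of_nonneg ?_ (fun _ _ _ => abs_nonneg _)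
    exact Finset.Ico_subset_Ico (by omega) (by omega)

/-- **Second step of the proof of Proposition A.1: random-index replacement
lemma.**  If the array `Y m n` has uniformly bounded first moments
`𝔼[|Y m n|] ≤ M`, `k n → ∞`, and `T n / k n → 1` in probability (no independence
assumed anywhere), then
`(1/kₙ) (∑_{m < Tₙ} Y m n − ∑_{m < kₙ} Y m n) → 0` in probability. -/
theorem random_index_replacement
    {Ω : Type*} [MeasurableSpace Ω] (P : Measure Ω) [IsProbabilityMeasure P]
    (Y : ℕ → ℕ → Ω → ℝ)
    (hYint : ∀ m n, Integrable (Y m n) P)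
    (M : ℝ) (hM : ∀ m n, ∫ ω, |Y m n ω| ∂P ≤ M)
    (k : ℕ → ℕ) (hk : Tendsto k atTop atTop)
    (T : ℕ → Ω → ℕ) (hTmeas : ∀ n, Measurable (T n))
    (hT : TendstoInMeasure P (fun n ω => (T n ω : ℝ) / (k n : ℝ)) atTop
      (fun _ => (1 : ℝ))) :
    TendstoInMeasure P
      (fun n ω => ((∑ m ∈ Finset.range (T n ω), Y m n ω)
          - ∑ m ∈ Finset.range (k n), Y m n ω) / (k n : ℝ)) atTop
      (fun _ => (0 : ℝ)) := by
  rw [tendstoInMeasure_iff_measureReal_dist] at hT ⊢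
  intro ε hε
  have hM0 : 0 ≤ M := (integral_nonneg (fun ω => abs_nonneg (Y 0 0 ω))).trans (hM 0 0)
  rw [Metric.tendsto_atTop']
  intro η hη
  set δ : ℝ := η * ε / (8 * (M + 1)) with hδdef
  have hδ : 0 < δ := by positivity
  have hev1 := (hT δ hδ).eventually (gt_mem_nhds (half_pos hη))
  have hev2 := (tendsto_natCast_atTop_atTop (R := ℝ)).comp hk |>.eventually_ge_atTop (1 / δ)
  have hev3 := hk.eventually_ge_atTop 1
  obtain ⟨N, hN⟩ := eventually_atTop.1 (hev1.and (hev2.and hev3))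
  refine ⟨N, fun n hn => ?_⟩
  obtain ⟨h1, h2, h3⟩ := hN n hn.le
  simp only [Function.comp_apply] at h2
  have hkpos : (0 : ℝ) < k n := by exact_mod_cast h3
  have hδk : 1 ≤ δ * k n := by
    rw [div_le_iff₀ hδ] at h2
    linarith
  set d : ℕ := ⌈δ * k n⌉₊ with hd
  have hd1 : δ * k n ≤ d := Nat.le_ceil _
  have hd2 : (d : ℝ) < δ * k n + 1 := Nat.ceil_lt_add_one (by positivity)
  set g : Ω → ℝ := fun ω => ∑ m ∈ Finset.Ico (k n - d) (k n + d), |Y m n ω| with hg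
  have hgint : Integrable g P := integrable_finsetSum _ (fun m _ => (hYint m n).abs)
  have hg0 : 0 ≤ᵐ[P] g := ae_of_all _ (fun ω => Finset.sum_nonneg (fun _ _ => abs_nonneg _))
  have hgE : ∫ ω, g ω ∂P ≤ 4 * δ * k n * M := by
    rw [hg, integral_finsetSum _ (fun m _ => (hYint m n).abs)]
    refine (Finset.sum_le_sum (fun m _ => hM m n)).trans ?_
    rw [Finset.sum_const, nsmul_eq_mul, Nat.card_Ico]
    refine mul_le_mul_of_nonneg_right ?_ hM0
    have : ((k n + d - (k n - d) : ℕ) : ℝ) ≤ ((2 * d : ℕ) : ℝ) := by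
      exact_mod_cast (by omega)
    push_cast at this
    linarith
  have hmk := mul_meas_ge_le_integral_of_nonneg hg0 hgint (ε * k n)
  have hsub : {ω | ε ≤ dist (((∑ m ∈ Finset.range (T n ω), Y m n ω)
          - ∑ m ∈ Finset.range (k n), Y m n ω) / (k n : ℝ)) 0}
      ⊆ {ω | δ ≤ dist ((T n ω : ℝ) / (k n : ℝ)) 1} ∪ {ω | ε * k n ≤ g ω} := by
    intro ω hω
    by_cases hc : δ ≤ dist ((T n ω : ℝ) / (k n : ℝ)) 1
    · exact Or.inl hc
    · right
      simp only [Set.mem_setOf_eq] at hω ⊢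
      rw [dist_zero_right, Real.norm_eq_abs, abs_div, abs_of_pos hkpos, le_div_iff₀ hkpos] at hω
      refine hω.trans ?_
      push Not at hc
      rw [Real.dist_eq, div_sub_one hkpos.ne', abs_div, abs_of_pos hkpos, div_lt_iff₀ hkpos,
        abs_lt] at hc
      refine rir_sum_diff (fun m => Y m n ω) _ _ d ?_ ?_
      · have : (T n ω : ℝ) ≤ k n + d := by linarith
        exact_mod_cast this
      · have : (k n : ℝ) ≤ T n ω + d := by linarith
        exact_mod_cast this
  have hle := (measureReal_mono (μ := P) hsub).trans (measureReal_union_le _ _)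
  have hfin : P.real {ω | ε * k n ≤ g ω} ≤ η / 2 := by
    have h5 : ε * k n * P.real {ω | ε * k n ≤ g ω} ≤ ε * k n * (η / 2) := by
      refine (hmk.trans hgE).trans ?_
      have h6 : δ * (8 * (M + 1)) = η * ε := by
        rw [hδdef]; field_simp
      have h7 : 4 * δ * M ≤ ε * (η / 2) := by nlinarith
      nlinarith
    exact le_of_mul_le_mul_left h5 (by positivity)
  rw [Real.dist_eq, sub_zero, abs_of_nonneg measureReal_nonneg]
  linarith
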